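/- arXiv:2103.13608 — 11 statements merged into one kernel-verified Lean document; each statement's English description precedes it below -/
import Mathlib

section
/- Let E be a real inner product space, s ≥ 1, τ ∈ ℝ, a : Fin s → Fin s → ℝ, b : Fin s → ℝ, u⁰ ∈ E and f₁, …, f_s ∈ E. Define the stage values U_i = u⁰ + τ·∑_j a_{i j}·f_j and the update u¹ = u⁰ + τ·∑_i b_i·f_i. Then ⟨u¹, u¹⟩ = ⟨u⁰, u⁰⟩ + 2τ·∑_i b_i·⟨f_i, U_i⟩ − τ²·∑_{i,j} (b_i·a_{i j} + b_j·a_{j i} − b_i·b_j)·⟨f_i, f_j⟩. (This algebraic expansion is the core identity used in the proof of Theorem 3.1.) -/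
/-!
Write `P = ∑ bᵢ⟪fᵢ, u⁰⟫`, `A = ∑ bᵢ aᵢⱼ ⟪fᵢ, fⱼ⟫` and `B = ∑ bᵢ bⱼ ⟪fᵢ, fⱼ⟫`. By bilinearity the
left-hand side is `⟪u⁰, u⁰⟫ + 2τP + τ²B`, the stage sum `∑ bᵢ⟪fᵢ, Uᵢ⟫` is `P + τA`, and, by the
symmetry of the inner product, the double sum on the right is `2A - B`.
-/

open scoped BigOperators RealInnerProductSpace

theorem RK_quadratic_expansion
    {E : Type*} [NormedAddCommGroup E] [InnerProductSpace ℝ E]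
    (s : ℕ) (hs : 1 ≤ s) (τ : ℝ) (a : Fin s → Fin s → ℝ) (b : Fin s → ℝ)
    (u0 : E) (f : Fin s → E)
    (U : Fin s → E) (hU : ∀ i, U i = u0 + τ • ∑ j, a i j • f j)
    (u1 : E) (hu1 : u1 = u0 + τ • ∑ i, b i • f i) :
    ⟪u1, u1⟫ = ⟪u0, u0⟫ + 2 * τ * ∑ i, b i * ⟪f i, U i⟫
      - τ ^ 2 * ∑ i, ∑ j, (b i * a i j + b j * a j i - b i * b j) * ⟪f i, f j⟫ := by
  have hsq : ⟪∑ i, b i • f i, ∑ i, b i • f i⟫ = ∑ i, ∑ j, b i * b j * ⟪f i, f j⟫ := by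
    simp only [sum_inner, inner_sum, real_inner_smul_left, real_inner_smul_right]
    exact Finset.sum_congr rfl fun i _ => Finset.sum_congr rfl fun j _ => by
      rw [real_inner_comm]; ring
  have hlin : ⟪∑ i, b i • f i, u0⟫ = ∑ i, b i * ⟪f i, u0⟫ := by
    simp only [sum_inner, real_inner_smul_left]
  have hstage : ∑ i, b i * ⟪f i, U i⟫
      = ∑ i, b i * ⟪f i, u0⟫ + τ * ∑ i, ∑ j, b i * a i j * ⟪f i, f j⟫ := by
    simp only [hU, inner_add_right, real_inner_smul_right, inner_sum, mul_add,
      Finset.sum_add_distrib, Finset.mul_sum]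
    congr 1
    exact Finset.sum_congr rfl fun i _ => Finset.sum_congr rfl fun j _ => by ring
  have hswap : ∑ i, ∑ j, b j * a j i * ⟪f i, f j⟫ = ∑ i, ∑ j, b i * a i j * ⟪f i, f j⟫ := by
    rw [Finset.sum_comm]
    exact Finset.sum_congr rfl fun i _ => Finset.sum_congr rfl fun j _ => by
      rw [real_inner_comm]
  have hdouble : ∑ i, ∑ j, (b i * a i j + b j * a j i - b i * b j) * ⟪f i, f j⟫
      = 2 * ∑ i, ∑ j, b i * a i j * ⟪f i, f j⟫ - ∑ i, ∑ j, b i * b j * ⟪f i, f j⟫ := by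
    simp only [sub_mul, add_mul, Finset.sum_sub_distrib, Finset.sum_add_distrib]
    rw [hswap]
    ring
  rw [hdouble, hstage, ← hsq, ← hlin, hu1, real_inner_add_add_self, real_inner_smul_right,
    real_inner_smul_left, real_inner_smul_right,
    real_inner_comm (∑ i, b i • f i) u0]
  ring
end

section
/- Let E be a real inner product space, s ≥ 1, τ ∈ ℝ, and let a : Fin s → Fin s → ℝ, b : Fin s → ℝ satisfy the symplecticity condition b_i·a_{i j} + b_j·a_{j i} − b_i·b_j = 0 for all i, j. Let u⁰ ∈ E and f₁, …, f_s ∈ E, set U_i = u⁰ + τ·∑_j a_{i j}·f_j and u¹ = u⁰ + τ·∑_i b_i·f_i, and suppose ⟨f_i, U_i⟩ = 0 for every i. Then ⟨u¹, u¹⟩ = ⟨u⁰, u⁰⟩. (Mass-conservation part of Theorem 3.1: symplectic Runge–Kutta methods preserve the quadratic invariant M[u] = (u, u).) -/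
/-!
Write `G = ∑ i, b i • f i` and `S = ∑ i, ∑ j, b i * a i j * ⟪f i, f j⟫`. Orthogonality of `f i` to
the stage value `U i` gives `⟪G, u0⟫ = -τ * S`, and the symplecticity condition, symmetrized over
`i` and `j`, gives `⟪G, G⟫ = 2 * S`. Hence the terms `2 * τ * ⟪G, u0⟫` and `τ ^ 2 * ⟪G, G⟫` in
the expansion of `⟪u0 + τ • G, u0 + τ • G⟫` cancel.
-/

open scoped BigOperators RealInnerProductSpace

theorem mass_conservation_symplectic_RK
    {E : Type*} [NormedAddCommGroup E] [InnerProductSpace ℝ E]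
    (s : ℕ) (hs : 1 ≤ s) (τ : ℝ) (a : Fin s → Fin s → ℝ) (b : Fin s → ℝ)
    (hsymp : ∀ i j, b i * a i j + b j * a j i - b i * b j = 0)
    (u0 : E) (f : Fin s → E)
    (U : Fin s → E) (hU : ∀ i, U i = u0 + τ • ∑ j, a i j • f j)
    (u1 : E) (hu1 : u1 = u0 + τ • ∑ i, b i • f i)
    (horth : ∀ i, ⟪f i, U i⟫ = 0) :
    ⟪u1, u1⟫ = ⟪u0, u0⟫ := by
  have hf : ∀ i, ⟪f i, u0⟫ = -(τ * ∑ j, a i j * ⟪f i, f j⟫) := by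
    intro i
    have h := horth i
    rw [hU i, inner_add_right, inner_smul_right, inner_sum] at h
    simp only [inner_smul_right] at h
    linarith
  have hG : ⟪∑ i, b i • f i, u0⟫ = -(τ * ∑ i, ∑ j, b i * a i j * ⟪f i, f j⟫) := by
    simp only [sum_inner, real_inner_smul_left, hf, Finset.mul_sum, ← Finset.sum_neg_distrib]
    refine Finset.sum_congr rfl fun i _ => Finset.sum_congr rfl fun j _ => ?_
    ring
  have hswap : ∑ i, ∑ j, b i * a i j * ⟪f i, f j⟫ = ∑ i, ∑ j, b j * a j i * ⟪f i, f j⟫ := by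
    rw [Finset.sum_comm]
    simp only [real_inner_comm]
  have hGG : ⟪∑ i, b i • f i, ∑ i, b i • f i⟫ = 2 * ∑ i, ∑ j, b i * a i j * ⟪f i, f j⟫ := by
    rw [two_mul]
    nth_rewrite 2 [hswap]
    simp only [sum_inner, inner_sum, real_inner_smul_left, real_inner_smul_right,
      ← Finset.sum_add_distrib]
    refine Finset.sum_congr rfl fun i _ => Finset.sum_congr rfl fun j _ => ?_
    rw [real_inner_comm (f i) (f j)]
    linear_combination -⟪f i, f j⟫ * hsymp i j
  rw [hu1, real_inner_add_add_self, real_inner_smul_right, real_inner_smul_left,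
    real_inner_smul_right, real_inner_comm (∑ i, b i • f i) u0, hG, hGG]
  ring
end

section
/- Let E be a real inner product space, L : E →ₗ[ℝ] E a symmetric linear map (⟨L x, y⟩ = ⟨x, L y⟩ for all x, y), p ≥ 1 an integer, and C₀ ∈ ℝ. Let s ≥ 1, τ ∈ ℝ, and let a : Fin s → Fin s → ℝ, b : Fin s → ℝ satisfy b_i·a_{i j} + b_j·a_{j i} − b_i·b_j = 0 for all i, j. Let u⁰ ∈ E, v⁰ ∈ ℝ, f₁, …, f_s ∈ E and g₁, …, g_s ∈ ℝ; set U_i = u⁰ + τ·∑_j a_{i j}·f_j, V_i = v⁰ + τ·∑_j a_{i j}·g_j, u¹ = u⁰ + τ·∑_i b_i·f_i and v¹ = v⁰ + τ·∑_i b_i·g_i. If ⟨L f_i, U_i⟩ + (2/(p·(p+1)))·V_i·g_i = 0 for every i, then −(1/2)·⟨L u¹, u¹⟩ − (1/(p·(p+1)))·((v¹)² − C₀) = −(1/2)·⟨L u⁰, u⁰⟩ − (1/(p·(p+1)))·((v⁰)² − C₀). (Energy-conservation part of Theorem 3.1: symplectic Runge–Kutta methods preserve the SAV-modified energy E[u,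 v] = −½(Lu, u) − (1/(p(p+1)))(v² − C₀).) -/
/-!
A symplectic Runge–Kutta step satisfies, for every symmetric bilinear form `B`, the discrete product
rule `B(u¹, u¹) - B(u⁰, u⁰) = 2τ ∑ᵢ bᵢ B(fᵢ, Uᵢ)` (`symplectic_quadratic_increment`): after expansion
the terms of order `τ` agree, and those of order `τ²` agree because `bᵢbⱼ` is the symmetrization
`bᵢaᵢⱼ + bⱼaⱼᵢ` and `B(fᵢ, fⱼ)` is symmetric. Applying this to `B(x, y) = ⟪L x, y⟫` on `E` and to the
product on `ℝ`, the change of the modified energy is `-τ` times the weighted sum over the stages of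
the quantities that vanish by hypothesis.
-/

open scoped BigOperators RealInnerProductSpace

/-- The discrete product rule of a symplectic Runge–Kutta step for a quadratic form. -/
theorem symplectic_quadratic_increment {M : Type*} [AddCommGroup M] [Module ℝ M]
    (B : M →ₗ[ℝ] M →ₗ[ℝ] ℝ) (hB : ∀ x y, B x y = B y x)
    {s : ℕ} (τ : ℝ) (a : Fin s → Fin s → ℝ) (b : Fin s → ℝ)
    (hsymp : ∀ i j, b i * a i j + b j * a j i - b i * b j = 0) (u : M) (f : Fin s → M) :
    B (u + τ • ∑ i, b i • f i) (u + τ • ∑ i, b i • f i) - B u u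
      = 2 * τ * ∑ i, b i * B (f i) (u + τ • ∑ j, a i j • f j) := by
  have hswap : ∑ i, ∑ j, b i * a i j * B (f i) (f j)
      = ∑ i, ∑ j, b j * a j i * B (f i) (f j) := by
    rw [Finset.sum_comm]
    simp only [hB]
  have hquad : B (∑ i, b i • f i) (∑ i, b i • f i)
      = 2 * ∑ i, ∑ j, b i * a i j * B (f i) (f j) := by
    have h : B (∑ i, b i • f i) (∑ i, b i • f i)
        = ∑ i, ∑ j, b i * b j * B (f i) (f j) := by
      simp only [map_sum, map_smul, LinearMap.sum_apply, LinearMap.smul_apply, smul_eq_mul,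
        Finset.mul_sum]
      rw [Finset.sum_comm]
      exact Finset.sum_congr rfl fun i _ => Finset.sum_congr rfl fun j _ => by ring
    rw [h, two_mul]
    nth_rewrite 2 [hswap]
    simp only [← Finset.sum_add_distrib]
    refine Finset.sum_congr rfl fun i _ => Finset.sum_congr rfl fun j _ => ?_
    linear_combination (-B (f i) (f j)) * hsymp i j
  have hlin : B (∑ i, b i • f i) u = ∑ i, b i * B (f i) u := by
    simp [map_sum, LinearMap.sum_apply]
  have hstage : ∑ i, b i * B (f i) (u + τ • ∑ j, a i j • f j)
      = ∑ i, b i * B (f i) u + τ * ∑ i, ∑ j, b i * a i j * B (f i) (f j) := by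
    simp only [map_add, map_smul, map_sum, smul_eq_mul, Finset.mul_sum, mul_add,
      Finset.sum_add_distrib]
    congr 1
    exact Finset.sum_congr rfl fun i _ => Finset.sum_congr rfl fun j _ => by ring
  rw [hstage, ← hlin]
  simp only [map_add, map_smul, LinearMap.add_apply, LinearMap.smul_apply, smul_eq_mul, hquad,
    hB u (∑ i, b i • f i)]
  ring

theorem energy_conservation_symplectic_RK
    {E : Type*} [NormedAddCommGroup E] [InnerProductSpace ℝ E]
    (L : E →ₗ[ℝ] E) (hL : ∀ x y, ⟪L x, y⟫ = ⟪x, L y⟫)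
    (p : ℕ) (hp : 1 ≤ p) (C₀ : ℝ)
    (s : ℕ) (hs : 1 ≤ s) (τ : ℝ) (a : Fin s → Fin s → ℝ) (b : Fin s → ℝ)
    (hsymp : ∀ i j, b i * a i j + b j * a j i - b i * b j = 0)
    (u0 : E) (v0 : ℝ) (f : Fin s → E) (g : Fin s → ℝ)
    (U : Fin s → E) (hU : ∀ i, U i = u0 + τ • ∑ j, a i j • f j)
    (V : Fin s → ℝ) (hV : ∀ i, V i = v0 + τ * ∑ j, a i j * g j)
    (u1 : E) (hu1 : u1 = u0 + τ • ∑ i, b i • f i)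
    (v1 : ℝ) (hv1 : v1 = v0 + τ * ∑ i, b i * g i)
    (hen : ∀ i, ⟪L (f i), U i⟫ + (2 / ((p : ℝ) * ((p : ℝ) + 1))) * V i * g i = 0) :
    -(1 / 2 : ℝ) * ⟪L u1, u1⟫ - (1 / ((p : ℝ) * ((p : ℝ) + 1))) * (v1 ^ 2 - C₀)
      = -(1 / 2 : ℝ) * ⟪L u0, u0⟫ - (1 / ((p : ℝ) * ((p : ℝ) + 1))) * (v0 ^ 2 - C₀) := by
  have hu := symplectic_quadratic_increment ((innerₗ E).comp L)
    (fun x y => by simp [hL x y, real_inner_comm]) τ a b hsymp u0 f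
  have hv := symplectic_quadratic_increment (LinearMap.mul ℝ ℝ)
    (fun x y => mul_comm x y) τ a b hsymp v0 g
  simp only [smul_eq_mul, LinearMap.mul_apply', ← hv1, ← hV] at hv
  simp only [LinearMap.comp_apply, innerₗ_apply_apply, ← hu1, ← hU] at hu
  have hsum : ∑ i, b i * ⟪L (f i), U i⟫
      = -(2 / ((p : ℝ) * ((p : ℝ) + 1))) * ∑ i, b i * (g i * V i) := by
    rw [Finset.mul_sum]
    exact Finset.sum_congr rfl fun i _ => by linear_combination b i * hen i
  rw [hsum] at hu
  linear_combination (-1 / 2 : ℝ) * hu - (1 / ((p : ℝ) * ((p : ℝ) + 1))) * hv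
end

section
/- Fix N ≥ 1, h > 0, an integer p ≥ 1, C₀ ∈ ℝ, and real N×N matrices D₁, D₂ such that D₁ is antisymmetric (D₁ᵀ = −D₁) and every row sum of D₁ is zero. Let u : ℝ → (Fin N → ℝ) and v : ℝ → ℝ be such that for every t the radicand satisfies ⟨u(t)^{⊙p}, u(t)⟩_h + C₀ > 0 and u is differentiable with derivative u'(t) = f(u(t), v(t)). Then the discrete momentum I_h(t) = ⟨u(t), 1⟩_h (where 1 is the all-ones vector) is constant in t. (Momentum part of Theorem 4.1: the Fourier pseudo-spectral semi-discretization conserves the discrete momentum.) -/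
/-!
The time derivative of `⟨u, 1⟩_h` is `⟨f(u, v), 1⟩_h = -⟨D₁ w, 1⟩_h` for some vector `w`. Since
`D₁` is antisymmetric with zero row sums, its column sums vanish as well, hence `⟨D₁ w, 1⟩_h = 0`
(`sum_mulVec_eq_zero`), and a function on `ℝ` with zero derivative is constant.
-/

open scoped BigOperators

noncomputable section

/-- Discrete inner product `⟨u, w⟩_h = h·∑ j, u j * w j`. -/
def dip {N : ℕ} (h : ℝ) (u w : Fin N → ℝ) : ℝ := h * ∑ j, u j * w j

/-- Componentwise power `u^{⊙p}`. -/
def pw {N : ℕ} (p : ℕ) (u : Fin N → ℝ) : Fin N → ℝ := fun j => (u j) ^ p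

/-- The SAV square root `r(u) = √(⟨u^{⊙p}, u⟩_h + C₀)`. -/
def rad {N : ℕ} (h : ℝ) (p : ℕ) (C₀ : ℝ) (u : Fin N → ℝ) : ℝ :=
  Real.sqrt (dip h (pw p u) u + C₀)

/-- The SAV vector field `f(u, v) = −D₁·(D₂·u + (v/(p·r(u)))·u^{⊙p})`. -/
def fSAV {N : ℕ} (h : ℝ) (p : ℕ) (C₀ : ℝ) (D₁ D₂ : Matrix (Fin N) (Fin N) ℝ)
    (u : Fin N → ℝ) (v : ℝ) : Fin N → ℝ :=
  -(D₁.mulVec (D₂.mulVec u + (v / ((p : ℝ) * rad h p C₀ u)) • pw p u))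

/-- The SAV scalar field `g(u, v) = ((p+1)/(2·r(u)))·⟨u^{⊙p}, f(u, v)⟩_h`. -/
def gSAV {N : ℕ} (h : ℝ) (p : ℕ) (C₀ : ℝ) (D₁ D₂ : Matrix (Fin N) (Fin N) ℝ)
    (u : Fin N → ℝ) (v : ℝ) : ℝ :=
  (((p : ℝ) + 1) / (2 * rad h p C₀ u)) * dip h (pw p u) (fSAV h p C₀ D₁ D₂ u v)

/-- Antisymmetry turns vanishing row sums into vanishing column sums, so the range of `D`
is orthogonal to the all-ones vector. -/
theorem sum_mulVec_eq_zero {N : ℕ} (D : Matrix (Fin N) (Fin N) ℝ)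
    (hD : D.transpose = -D) (hrow : ∀ i, ∑ j, D i j = 0) (w : Fin N → ℝ) :
    ∑ i, D.mulVec w i = 0 := by
  have hcol : ∀ j, ∑ i, D i j = 0 := fun j => by
    have hij : ∀ i, D i j = -D j i := fun i => congrFun (congrFun hD j) i
    simp only [hij, Finset.sum_neg_distrib, hrow, neg_zero]
  simp only [Matrix.mulVec, dotProduct]
  rw [Finset.sum_comm]
  simp only [← Finset.sum_mul, hcol, zero_mul, Finset.sum_const_zero]

/-- Momentum part of Theorem 4.1: the Fourier pseudo-spectral semi-discretization
conserves the discrete momentum `I_h(t) = ⟨u(t), 1⟩_h`. -/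
theorem discrete_momentum_conserved
    (N : ℕ) (hN : 1 ≤ N) (h : ℝ) (hh : 0 < h) (p : ℕ) (hp : 1 ≤ p) (C₀ : ℝ)
    (D₁ D₂ : Matrix (Fin N) (Fin N) ℝ)
    (hD₁ : D₁.transpose = -D₁) (hrow : ∀ i, ∑ j, D₁ i j = 0)
    (u : ℝ → Fin N → ℝ) (v : ℝ → ℝ)
    (hpos : ∀ t, 0 < dip h (pw p (u t)) (u t) + C₀)
    (hu : ∀ t, HasDerivAt u (fSAV h p C₀ D₁ D₂ (u t) (v t)) t) :
    ∀ t t' : ℝ, dip h (u t) (fun _ => 1) = dip h (u t') (fun _ => 1) := by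
  have key : ∀ t, HasDerivAt (fun t => dip h (u t) (fun _ => 1)) 0 t := by
    intro t
    have hsum : HasDerivAt (fun t => h * ∑ j, u t j)
        (h * ∑ j, fSAV h p C₀ D₁ D₂ (u t) (v t) j) t :=
      (HasDerivAt.fun_sum fun j _ => hasDerivAt_pi.1 (hu t) j).const_mul h
    have hzero : ∑ j, fSAV h p C₀ D₁ D₂ (u t) (v t) j = 0 := by
      simp only [fSAV, Pi.neg_apply, Finset.sum_neg_distrib,
        sum_mulVec_eq_zero D₁ hD₁ hrow, neg_zero]
    simpa [dip, hzero] using hsum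
  exact is_const_of_deriv_eq_zero (fun t => (key t).differentiableAt) fun t => (key t).deriv
end
end

section
/- Fix N ≥ 1, h > 0, an integer p ≥ 1, C₀ ∈ ℝ, and real N×N matrices D₁, D₂ such that D₁ is antisymmetric (D₁ᵀ = −D₁) and D₂ is symmetric (D₂ᵀ = D₂). Let u : ℝ → (Fin N → ℝ) and v : ℝ → ℝ be differentiable with u'(t) = f(u(t), v(t)) and v'(t) = g(u(t), v(t)) for all t, where ⟨u(t)^{⊙p}, u(t)⟩_h + C₀ > 0 for all t. Then the discrete energy E_h(t) = −(1/2)·⟨D₂·u(t), u(t)⟩_h − (1/(p·(p+1)))·(v(t)² − C₀) is constant in t. (Energy part of Theorem 4.1: the Fourier pseudo-spectral semi-discretization of the SAV system conserves the discrete modified energy.) -/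
/-!
Write `w = D₂ u + (v / (p r(u))) u^{⊙p}`, so that `u' = f = -D₁ w`. Symmetry of `D₂` gives
`d/dt ⟨D₂ u, u⟩ = 2 ⟨D₂ u, f⟩`, and the scalar equation gives
`2 v v' / (p (p + 1)) = (v / (p r(u))) ⟨u^{⊙p}, f⟩`. Hence the energy has derivative
`-⟨w, f⟩ = ⟨w, D₁ w⟩`, which vanishes since `D₁` is antisymmetric.
-/

open scoped BigOperators

noncomputable section

theorem dip_eq_dotProduct {N : ℕ} (h : ℝ) (u w : Fin N → ℝ) :
    dip h u w = h * (u ⬝ᵥ w) := rfl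

theorem dotProduct_mulVec_self_of_antisymm {N : ℕ} (D : Matrix (Fin N) (Fin N) ℝ)
    (hD : D.transpose = -D) (w : Fin N → ℝ) : w ⬝ᵥ D.mulVec w = 0 := by
  have key : w ⬝ᵥ D.mulVec w = -(w ⬝ᵥ D.mulVec w) := by
    conv_lhs => rw [Matrix.dotProduct_mulVec, ← Matrix.mulVec_transpose, hD, Matrix.neg_mulVec,
      neg_dotProduct, dotProduct_comm]
  linarith

theorem hasDerivAt_dip_mulVec_self {N : ℕ} (h : ℝ) (D : Matrix (Fin N) (Fin N) ℝ)
    (hD : D.transpose = D) (u : ℝ → Fin N → ℝ) (u' : Fin N → ℝ) (t : ℝ)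
    (hu : HasDerivAt u u' t) :
    HasDerivAt (fun s => dip h (D.mulVec (u s)) (u s)) (2 * dip h (D.mulVec (u t)) u') t := by
  have hc : ∀ j, HasDerivAt (fun s => u s j) (u' j) t := hasDerivAt_pi.mp hu
  have hDc : ∀ j, HasDerivAt (fun s => D.mulVec (u s) j) (D.mulVec u' j) t := fun j =>
    HasDerivAt.fun_sum (u := Finset.univ) fun k _ => (hc k).const_mul (D j k)
  have hsum : HasDerivAt (fun s => dip h (D.mulVec (u s)) (u s))
      (h * ∑ j, (D.mulVec u' j * u t j + D.mulVec (u t) j * u' j)) t :=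
    (HasDerivAt.fun_sum fun j _ => (hDc j).mul (hc j)).const_mul h
  convert hsum using 1
  have hsymm : D.mulVec u' ⬝ᵥ u t = D.mulVec (u t) ⬝ᵥ u' := by
    rw [dotProduct_comm, Matrix.dotProduct_mulVec, ← Matrix.mulVec_transpose, hD]
  rw [Finset.sum_add_distrib]
  change 2 * (h * (D.mulVec (u t) ⬝ᵥ u')) =
    h * (D.mulVec u' ⬝ᵥ u t + D.mulVec (u t) ⬝ᵥ u')
  rw [hsymm]
  ring

/-- Energy part of Theorem 4.1: the Fourier pseudo-spectral semi-discretization of the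
SAV system conserves the discrete modified energy. -/
theorem discrete_energy_conserved
    (N : ℕ) (hN : 1 ≤ N) (h : ℝ) (hh : 0 < h) (p : ℕ) (hp : 1 ≤ p) (C₀ : ℝ)
    (D₁ D₂ : Matrix (Fin N) (Fin N) ℝ)
    (hD₁ : D₁.transpose = -D₁) (hD₂ : D₂.transpose = D₂)
    (u : ℝ → Fin N → ℝ) (v : ℝ → ℝ)
    (hpos : ∀ t, 0 < dip h (pw p (u t)) (u t) + C₀)
    (hu : ∀ t, HasDerivAt u (fSAV h p C₀ D₁ D₂ (u t) (v t)) t)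
    (hv : ∀ t, HasDerivAt v (gSAV h p C₀ D₁ D₂ (u t) (v t)) t) :
    ∀ t t' : ℝ,
      -(1 / 2 : ℝ) * dip h (D₂.mulVec (u t)) (u t)
          - (1 / ((p : ℝ) * ((p : ℝ) + 1))) * ((v t) ^ 2 - C₀)
        = -(1 / 2 : ℝ) * dip h (D₂.mulVec (u t')) (u t')
          - (1 / ((p : ℝ) * ((p : ℝ) + 1))) * ((v t') ^ 2 - C₀) := by
  have hderiv : ∀ t, HasDerivAt (fun s => -(1 / 2 : ℝ) * dip h (D₂.mulVec (u s)) (u s)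
      - (1 / ((p : ℝ) * ((p : ℝ) + 1))) * ((v s) ^ 2 - C₀)) 0 t := by
    intro t
    have hE := ((hasDerivAt_dip_mulVec_self h D₂ hD₂ u _ t (hu t)).const_mul (-(1 / 2 : ℝ))).sub
      ((((hv t).pow 2).sub_const C₀).const_mul (1 / ((p : ℝ) * ((p : ℝ) + 1))))
    refine hE.congr_deriv ?_
    have hr : rad h p C₀ (u t) ≠ 0 := (Real.sqrt_pos.mpr (hpos t)).ne'
    have hp0 : (p : ℝ) ≠ 0 := by positivity
    have hp1 : (p : ℝ) + 1 ≠ 0 := by positivity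
    -- `⟨w, f⟩ = 0`, split along the two summands of `w`
    have horth : D₂.mulVec (u t) ⬝ᵥ fSAV h p C₀ D₁ D₂ (u t) (v t)
        + (v t / ((p : ℝ) * rad h p C₀ (u t))) *
          (pw p (u t) ⬝ᵥ fSAV h p C₀ D₁ D₂ (u t) (v t)) = 0 := by
      rw [← smul_eq_mul, ← smul_dotProduct, ← add_dotProduct, fSAV, dotProduct_neg,
        dotProduct_mulVec_self_of_antisymm D₁ hD₁, neg_zero]
    rw [gSAV, dip_eq_dotProduct, dip_eq_dotProduct, eq_neg_of_add_eq_zero_left horth]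
    field_simp
    ring
  intro t t'
  exact is_const_of_deriv_eq_zero (fun s => (hderiv s).differentiableAt)
    (fun s => (hderiv s).deriv) t t'
end
end

section
/- Fix N ≥ 1, h > 0, an integer p ≥ 1, C₀ ∈ ℝ, and real N×N matrices D₁, D₂ such that D₁ is antisymmetric (D₁ᵀ = −D₁) and every row sum of D₁ is zero. Then for every u : Fin N → ℝ and v ∈ ℝ with ⟨u^{⊙p}, u⟩_h + C₀ > 0, one has ⟨f(u, v), 1⟩_h = 0, where 1 is the all-ones vector. (Identity (4.15) of Corollary 4.1: the SAV vector field is orthogonal to the constant vector.) -/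
open scoped BigOperators

noncomputable section

/-- Identity (4.15) of Corollary 4.1: the SAV vector field is orthogonal to the
constant vector. -/
theorem fSAV_orthogonal_ones
    (N : ℕ) (hN : 1 ≤ N) (h : ℝ) (hh : 0 < h) (p : ℕ) (hp : 1 ≤ p) (C₀ : ℝ)
    (D₁ D₂ : Matrix (Fin N) (Fin N) ℝ)
    (hD₁ : D₁.transpose = -D₁) (hrow : ∀ i, ∑ j, D₁ i j = 0) :
    ∀ (u : Fin N → ℝ) (v : ℝ), 0 < dip h (pw p u) u + C₀ →
      dip h (fSAV h p C₀ D₁ D₂ u v) (fun _ => 1) = 0 := by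
  intro u v _
  -- Antisymmetry turns the vanishing row sums of `D₁` into vanishing column sums.
  have hcol : ∀ j, ∑ i, D₁ i j = 0 := fun j => by
    have hanti : ∀ i, D₁ i j = -D₁ j i := fun i => congrFun (congrFun hD₁ j) i
    simp only [hanti, Finset.sum_neg_distrib, hrow, neg_zero]
  -- Hence the entries of `D₁ w` sum to zero, whatever `w` is.
  have hsum : ∀ w : Fin N → ℝ, ∑ i, D₁.mulVec w i = 0 := fun w => by
    simp only [Matrix.mulVec, dotProduct]
    rw [Finset.sum_comm]
    simp only [← Finset.sum_mul, hcol, zero_mul, Finset.sum_const_zero]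
  simp only [dip, fSAV, Pi.neg_apply, mul_one, Finset.sum_neg_distrib, hsum, neg_zero, mul_zero]
end
end

section
/- Fix N ≥ 1, h > 0, an integer p ≥ 1, C₀ ∈ ℝ, and real N×N matrices D₁, D₂ such that D₁ is antisymmetric (D₁ᵀ = −D₁). Then for every u : Fin N → ℝ and v ∈ ℝ with ⟨u^{⊙p}, u⟩_h + C₀ > 0, one has −⟨D₂·u, f(u, v)⟩_h − (2/(p·(p+1)))·v·g(u, v) = 0. (Identity (4.16) of Corollary 4.1, expressing that the modified energy is a pointwise invariant of the semi-discrete SAV vector field.) -/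
/-!
Put `w = D₂ u + (v / (p r(u))) u^{⊙p}`, so that `f(u, v) = -D₁ w`. The factor `p + 1` cancels in
`(2 / (p (p + 1))) v g(u, v)`, so the left-hand side equals `-⟨w, f(u, v)⟩_h = ⟨w, D₁ w⟩_h`, which
vanishes because the quadratic form of the antisymmetric matrix `D₁` is zero
(`dip_mulVec_self_eq_zero`).
-/

open scoped BigOperators

noncomputable section

theorem dip_mulVec_self_eq_zero {N : ℕ} (h : ℝ) (A : Matrix (Fin N) (Fin N) ℝ)
    (hA : A.transpose = -A) (w : Fin N → ℝ) : dip h w (A.mulVec w) = 0 := by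
  have key : w ⬝ᵥ A.mulVec w = -(w ⬝ᵥ A.mulVec w) := by
    calc w ⬝ᵥ A.mulVec w = A.transpose.mulVec w ⬝ᵥ w := by
          rw [Matrix.dotProduct_mulVec, Matrix.mulVec_transpose]
      _ = -(w ⬝ᵥ A.mulVec w) := by
          rw [hA, Matrix.neg_mulVec, neg_dotProduct, dotProduct_comm]
  have hzero : w ⬝ᵥ A.mulVec w = 0 := by linarith
  change h * (w ⬝ᵥ A.mulVec w) = 0
  rw [hzero, mul_zero]

theorem dip_add_smul_left {N : ℕ} (h c : ℝ) (a b w : Fin N → ℝ) :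
    dip h (a + c • b) w = dip h a w + c * dip h b w := by
  change h * ((a + c • b) ⬝ᵥ w) = h * (a ⬝ᵥ w) + c * (h * (b ⬝ᵥ w))
  rw [add_dotProduct, smul_dotProduct, smul_eq_mul]
  ring

theorem dip_neg_right {N : ℕ} (h : ℝ) (a w : Fin N → ℝ) : dip h a (-w) = -dip h a w := by
  simp [dip]

/-- Identity (4.16) of Corollary 4.1: the modified energy is a pointwise invariant of
the semi-discrete SAV vector field. -/
theorem energy_invariant_of_fSAV
    (N : ℕ) (hN : 1 ≤ N) (h : ℝ) (hh : 0 < h) (p : ℕ) (hp : 1 ≤ p) (C₀ : ℝ)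
    (D₁ D₂ : Matrix (Fin N) (Fin N) ℝ)
    (hD₁ : D₁.transpose = -D₁) :
    ∀ (u : Fin N → ℝ) (v : ℝ), 0 < dip h (pw p u) u + C₀ →
      -dip h (D₂.mulVec u) (fSAV h p C₀ D₁ D₂ u v)
        - (2 / ((p : ℝ) * ((p : ℝ) + 1))) * v * gSAV h p C₀ D₁ D₂ u v = 0 := by
  intro u v hpos
  have hr : rad h p C₀ u ≠ 0 := (Real.sqrt_pos.mpr hpos).ne'
  have hp0 : (p : ℝ) ≠ 0 := by positivity
  have hp1 : (p : ℝ) + 1 ≠ 0 := by positivity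
  have horth : dip h (D₂.mulVec u + (v / ((p : ℝ) * rad h p C₀ u)) • pw p u)
      (fSAV h p C₀ D₁ D₂ u v) = 0 := by
    rw [fSAV, dip_neg_right, dip_mulVec_self_eq_zero h D₁ hD₁, neg_zero]
  rw [dip_add_smul_left] at horth
  have hcoef : (2 / ((p : ℝ) * ((p : ℝ) + 1))) * v * gSAV h p C₀ D₁ D₂ u v
      = v / ((p : ℝ) * rad h p C₀ u) * dip h (pw p u) (fSAV h p C₀ D₁ D₂ u v) := by
    rw [gSAV]
    field_simp
  rw [hcoef]
  linarith
end
end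

section
/- Fix N ≥ 1, h > 0, an integer p ≥ 1, C₀ ∈ ℝ, and real N×N matrices D₁, D₂ such that D₁ is antisymmetric (D₁ᵀ = −D₁) and D₂ is symmetric (D₂ᵀ = D₂). Let s ≥ 1, τ ∈ ℝ, and let a : Fin s → Fin s → ℝ, b : Fin s → ℝ satisfy b_i·a_{i j} + b_j·a_{j i} − b_i·b_j = 0 for all i, j. Let u⁰ : Fin N → ℝ, v⁰ ∈ ℝ, and let stage values U_i : Fin N → ℝ, V_i ∈ ℝ satisfy ⟨U_i^{⊙p}, U_i⟩_h + C₀ > 0, U_i = u⁰ + τ·∑_j a_{i j}·f(U_j, V_j) and V_i = v⁰ + τ·∑_j a_{i j}·g(U_j, V_j) for all i; set u¹ = u⁰ + τ·∑_i b_i·f(U_i, V_i) and v¹ = v⁰ + τ·∑_i b_i·g(U_i, V_i). Then −(1/2)·⟨D₂·u¹, u¹⟩_h − (1/(p·(p+1)))·((v¹)² − C₀) = −(1/2)·⟨D₂·u⁰, u⁰⟩_h − (1/(p·(p+1)))·((v⁰)² − C₀). (Energy part of Theorem 4.2: the fully discrete symplectic SAV–Runge–Kutta scheme conserves the discrete modified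 energy exactly.) -/
/-!
Up to a constant, the modified energy is a quadratic form in `(u, v)`, and a symplectic Runge–Kutta method changes a
quadratic form `B x x` by exactly `2τ ∑ i, b i * B (X i) (k i)`, where `X i` are the stages and
`k i` the stage slopes (`rk_quadratic_increment`). Applied to `⟨D₂ u, u⟩` and to `v²`, this reduces
the claim to the vanishing, at each stage, of the energy derivative along the vector field
(`stage_energy_rate`). With `w = D₂ u + (v / (p r(u))) u^{⊙p}` that derivative is
`-⟨w, f⟩ = ⟨w, D₁ w⟩`, which is zero because `D₁` is antisymmetric.
-/

open scoped BigOperators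

noncomputable section

/-- Cooper's identity: the increment of a quadratic form over one step of a symplectic
Runge–Kutta method with arbitrary stage slopes `k`. -/
lemma rk_quadratic_increment {E : Type*} [AddCommGroup E] [Module ℝ E]
    (B : E →ₗ[ℝ] E →ₗ[ℝ] ℝ) (hB : ∀ x y, B x y = B y x)
    {s : ℕ} (τ : ℝ) (a : Fin s → Fin s → ℝ) (b : Fin s → ℝ)
    (hsymp : ∀ i j, b i * a i j + b j * a j i - b i * b j = 0)
    (x₀ x₁ : E) (X k : Fin s → E)
    (hX : ∀ i, X i = x₀ + τ • ∑ j, a i j • k j)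
    (hx₁ : x₁ = x₀ + τ • ∑ i, b i • k i) :
    B x₁ x₁ = B x₀ x₀ + 2 * τ * ∑ i, b i * B (X i) (k i) := by
  have hquad : B x₁ x₁ = B x₀ x₀ + 2 * τ * ∑ i, b i * B x₀ (k i)
      + τ ^ 2 * ∑ i, ∑ j, b i * b j * B (k i) (k j) := by
    have hcross : B (∑ i, b i • k i) x₀ = ∑ i, b i * B x₀ (k i) := by
      rw [hB]; simp
    have hdouble : B (∑ i, b i • k i) (∑ i, b i • k i)
        = ∑ i, ∑ j, b i * b j * B (k i) (k j) := by
      simp only [map_sum, map_smul, LinearMap.sum_apply, LinearMap.smul_apply, smul_eq_mul,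
        Finset.mul_sum]
      rw [Finset.sum_comm]
      exact Finset.sum_congr rfl fun i _ => Finset.sum_congr rfl fun j _ => by ring
    have hcross' := (hB x₀ (∑ i, b i • k i)).trans hcross
    rw [hx₁]
    simp only [map_add, map_smul, LinearMap.add_apply, LinearMap.smul_apply, smul_eq_mul,
      hcross, hcross', hdouble]
    ring
  have hstage : ∑ i, b i * B (X i) (k i) = ∑ i, b i * B x₀ (k i)
      + τ * ∑ i, ∑ j, b i * a i j * B (k i) (k j) := by
    rw [Finset.mul_sum, ← Finset.sum_add_distrib]
    refine Finset.sum_congr rfl fun i _ => ?_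
    rw [hX i]
    simp only [map_add, map_smul, map_sum, LinearMap.add_apply, LinearMap.smul_apply,
      LinearMap.sum_apply, smul_eq_mul, mul_add, Finset.mul_sum]
    congr 1
    exact Finset.sum_congr rfl fun j _ => by rw [hB (k j)]; ring
  -- Symmetrizing the double sum in `i, j` is what brings in the symplecticity condition.
  have hsymm : ∑ i, ∑ j, b i * b j * B (k i) (k j)
      = 2 * ∑ i, ∑ j, b i * a i j * B (k i) (k j) := by
    have hswap : ∑ i, ∑ j, b i * a i j * B (k i) (k j)
        = ∑ i, ∑ j, b j * a j i * B (k i) (k j) := by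
      rw [Finset.sum_comm]
      exact Finset.sum_congr rfl fun i _ => Finset.sum_congr rfl fun j _ => by rw [hB (k j)]
    rw [two_mul]
    nth_rewrite 2 [hswap]
    simp only [← Finset.sum_add_distrib]
    refine Finset.sum_congr rfl fun i _ => Finset.sum_congr rfl fun j _ => ?_
    linear_combination -(B (k i) (k j)) * hsymp i j
  rw [hquad, hstage, hsymm]
  ring

open Matrix in
lemma dotProduct_mulVec_self_of_antisymm_s11 {N : ℕ} (A : Matrix (Fin N) (Fin N) ℝ)
    (hA : A.transpose = -A) (w : Fin N → ℝ) : w ⬝ᵥ A *ᵥ w = 0 := by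
  have hneg : w ⬝ᵥ A *ᵥ w = -(w ⬝ᵥ A *ᵥ w) := by
    conv_lhs => rw [dotProduct_mulVec, ← mulVec_transpose, hA, neg_mulVec, neg_dotProduct,
      dotProduct_comm]
  linarith

/-- The SAV vector field is tangent to the level sets of the modified energy. If `r(u) = 0`,
both terms containing `1 / r(u)` are zero by convention, so the identity persists. -/
lemma stage_energy_rate {N : ℕ} (h : ℝ) (p : ℕ) (C₀ : ℝ)
    (D₁ D₂ : Matrix (Fin N) (Fin N) ℝ) (hD₁ : D₁.transpose = -D₁) (u : Fin N → ℝ) (v : ℝ) :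
    dip h (D₂.mulVec u) (fSAV h p C₀ D₁ D₂ u v)
      + 2 / ((p : ℝ) * ((p : ℝ) + 1)) * (v * gSAV h p C₀ D₁ D₂ u v) = 0 := by
  have horth := dotProduct_mulVec_self_of_antisymm_s11 D₁ hD₁
    (D₂.mulVec u + (v / ((p : ℝ) * rad h p C₀ u)) • pw p u)
  have hf : D₁.mulVec (D₂.mulVec u + (v / ((p : ℝ) * rad h p C₀ u)) • pw p u)
      = -fSAV h p C₀ D₁ D₂ u v := by simp [fSAV]
  rw [hf, dotProduct_neg, add_dotProduct, smul_dotProduct, smul_eq_mul] at horth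
  have hcoef : 2 / ((p : ℝ) * ((p : ℝ) + 1)) * (v * (((p : ℝ) + 1) / (2 * rad h p C₀ u)))
      = v / ((p : ℝ) * rad h p C₀ u) := by
    have hp1 : (p : ℝ) + 1 ≠ 0 := by positivity
    rw [div_mul_eq_mul_div, mul_div_assoc', mul_div_assoc', div_div,
      show 2 * (v * ((p : ℝ) + 1)) = v * (2 * ((p : ℝ) + 1)) by ring,
      show 2 * rad h p C₀ u * ((p : ℝ) * ((p : ℝ) + 1))
        = ((p : ℝ) * rad h p C₀ u) * (2 * ((p : ℝ) + 1)) by ring,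
      mul_div_mul_right _ _ (by positivity)]
  have hdip : ∀ x y : Fin N → ℝ, dip h x y = h * (x ⬝ᵥ y) := fun _ _ => rfl
  simp only [gSAV, hdip]
  linear_combination (-h) * horth
    + h * (pw p u ⬝ᵥ fSAV h p C₀ D₁ D₂ u v) * hcoef

/-- Energy part of Theorem 4.2: the fully discrete symplectic SAV–Runge–Kutta scheme
conserves the discrete modified energy exactly. -/
theorem fully_discrete_energy_conserved
    (N : ℕ) (hN : 1 ≤ N) (h : ℝ) (hh : 0 < h) (p : ℕ) (hp : 1 ≤ p) (C₀ : ℝ)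
    (D₁ D₂ : Matrix (Fin N) (Fin N) ℝ)
    (hD₁ : D₁.transpose = -D₁) (hD₂ : D₂.transpose = D₂)
    (s : ℕ) (hs : 1 ≤ s) (τ : ℝ) (a : Fin s → Fin s → ℝ) (b : Fin s → ℝ)
    (hsymp : ∀ i j, b i * a i j + b j * a j i - b i * b j = 0)
    (u0 : Fin N → ℝ) (v0 : ℝ)
    (U : Fin s → Fin N → ℝ) (V : Fin s → ℝ)
    (hpos : ∀ i, 0 < dip h (pw p (U i)) (U i) + C₀)
    (hU : ∀ i, U i = u0 + τ • ∑ j, a i j • fSAV h p C₀ D₁ D₂ (U j) (V j))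
    (hV : ∀ i, V i = v0 + τ * ∑ j, a i j * gSAV h p C₀ D₁ D₂ (U j) (V j))
    (u1 : Fin N → ℝ) (hu1 : u1 = u0 + τ • ∑ i, b i • fSAV h p C₀ D₁ D₂ (U i) (V i))
    (v1 : ℝ) (hv1 : v1 = v0 + τ * ∑ i, b i * gSAV h p C₀ D₁ D₂ (U i) (V i)) :
    -(1 / 2 : ℝ) * dip h (D₂.mulVec u1) u1
        - (1 / ((p : ℝ) * ((p : ℝ) + 1))) * (v1 ^ 2 - C₀)
      = -(1 / 2 : ℝ) * dip h (D₂.mulVec u0) u0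
        - (1 / ((p : ℝ) * ((p : ℝ) + 1))) * (v0 ^ 2 - C₀) := by
  have hsymmD₂ : ∀ x y : Fin N → ℝ, D₂.mulVec x ⬝ᵥ y = D₂.mulVec y ⬝ᵥ x := by
    intro x y
    rw [dotProduct_comm, Matrix.dotProduct_mulVec, ← Matrix.mulVec_transpose, hD₂]
  have hB : ∀ x y, Matrix.toLinearMap₂' ℝ D₂ x y = D₂.mulVec x ⬝ᵥ y := by
    intro x y
    rw [Matrix.toLinearMap₂'_apply', dotProduct_comm, hsymmD₂]
  have hu := rk_quadratic_increment (Matrix.toLinearMap₂' ℝ D₂)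
    (fun x y => by rw [hB, hB, hsymmD₂]) τ a b hsymp u0 u1 U
    (fun i => fSAV h p C₀ D₁ D₂ (U i) (V i)) hU hu1
  have hv := rk_quadratic_increment (LinearMap.mul ℝ ℝ) (fun x y => mul_comm x y)
    τ a b hsymp v0 v1 V (fun i => gSAV h p C₀ D₁ D₂ (U i) (V i)) hV hv1
  simp only [hB] at hu
  simp only [LinearMap.mul_apply'] at hv
  have hrate : h * ∑ i, b i * (D₂.mulVec (U i) ⬝ᵥ fSAV h p C₀ D₁ D₂ (U i) (V i))
      + 2 / ((p : ℝ) * ((p : ℝ) + 1)) * ∑ i, b i * (V i * gSAV h p C₀ D₁ D₂ (U i) (V i)) = 0 := by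
    rw [Finset.mul_sum, Finset.mul_sum, ← Finset.sum_add_distrib]
    refine Finset.sum_eq_zero fun i _ => ?_
    have hi := stage_energy_rate h p C₀ D₁ D₂ hD₁ (U i) (V i)
    rw [show dip h (D₂.mulVec (U i)) (fSAV h p C₀ D₁ D₂ (U i) (V i))
      = h * (D₂.mulVec (U i) ⬝ᵥ fSAV h p C₀ D₁ D₂ (U i) (V i)) from rfl] at hi
    linear_combination b i * hi
  have hdip : ∀ x y : Fin N → ℝ, dip h x y = h * (x ⬝ᵥ y) := fun _ _ => rfl
  rw [hdip, hdip]
  linear_combination (-(1 / 2) * h) * hu - (1 / ((p : ℝ) * ((p : ℝ) + 1))) * hv - τ * hrate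
end
end

section
/- Let E be a real inner product space, s ≥ 1, τ ∈ ℝ, and let a : Fin s → Fin s → ℝ, b : Fin s → ℝ satisfy b_i·a_{i j} + b_j·a_{j i} − b_i·b_j = 0 for all i, j. Let u⁰ ∈ E and f₁, …, f_s ∈ E, set U_i = u⁰ + τ·∑_j a_{i j}·f_j and u¹ = u⁰ + τ·∑_i b_i·f_i. Then ⟨u¹, u¹⟩ − ⟨u⁰, u⁰⟩ = 2τ·∑_i b_i·⟨f_i, U_i⟩. (This per-step mass-change identity for symplectic Runge–Kutta methods is the key step in the proof of the mass-error bound of Theorem 4.2.) -/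
open scoped BigOperators RealInnerProductSpace

/-!
Expanding `⟪u1, u1⟫` gives a cross term `2τ ⟪u0, ∑ bᵢ fᵢ⟫` and a quadratic term
`τ² ∑ᵢⱼ bᵢ bⱼ ⟪fᵢ, fⱼ⟫`. Since the Gram matrix is symmetric, replacing `bᵢ bⱼ` by
`bᵢ aᵢⱼ + bⱼ aⱼᵢ` turns the quadratic term into `2τ² ∑ᵢⱼ bᵢ aᵢⱼ ⟪fᵢ, fⱼ⟫`, which is exactly what
the stage increments contribute to `2τ ∑ bᵢ ⟪fᵢ, Uᵢ⟫`.
-/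

theorem mass_change_symplectic_RK
    {E : Type*} [NormedAddCommGroup E] [InnerProductSpace ℝ E]
    (s : ℕ) (hs : 1 ≤ s) (τ : ℝ) (a : Fin s → Fin s → ℝ) (b : Fin s → ℝ)
    (hsymp : ∀ i j, b i * a i j + b j * a j i - b i * b j = 0)
    (u0 : E) (f : Fin s → E)
    (U : Fin s → E) (hU : ∀ i, U i = u0 + τ • ∑ j, a i j • f j)
    (u1 : E) (hu1 : u1 = u0 + τ • ∑ i, b i • f i) :
    ⟪u1, u1⟫ - ⟪u0, u0⟫ = 2 * τ * ∑ i, b i * ⟪f i, U i⟫ := by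
  have quad : ⟪∑ i, b i • f i, ∑ i, b i • f i⟫ = 2 * ∑ i, ∑ j, b i * a i j * ⟪f i, f j⟫ := by
    have swap : ∑ i, ∑ j, b i * a i j * ⟪f i, f j⟫ = ∑ i, ∑ j, b j * a j i * ⟪f i, f j⟫ := by
      rw [Finset.sum_comm]
      simp only [real_inner_comm]
    rw [two_mul]
    nth_rewrite 2 [swap]
    simp only [sum_inner, inner_sum, real_inner_smul_left, real_inner_smul_right,
      ← Finset.sum_add_distrib]
    refine Finset.sum_congr rfl fun i _ => Finset.sum_congr rfl fun j _ => ?_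
    rw [real_inner_comm (f i) (f j)]
    linear_combination (-⟪f i, f j⟫) * hsymp i j
  have stages : ∑ i, b i * ⟪f i, U i⟫
      = ⟪u0, ∑ i, b i • f i⟫ + τ * ∑ i, ∑ j, b i * a i j * ⟪f i, f j⟫ := by
    simp only [hU, inner_add_right, inner_sum, real_inner_smul_right, Finset.mul_sum,
      ← Finset.sum_add_distrib]
    refine Finset.sum_congr rfl fun i _ => ?_
    rw [mul_add, Finset.mul_sum, real_inner_comm]
    congr 1
    exact Finset.sum_congr rfl fun j _ => by ring
  rw [stages, hu1, real_inner_add_add_self, real_inner_smul_right, real_inner_smul_left,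
    real_inner_smul_right, quad]
  ring
end

section
/- Fix N ≥ 1, h > 0, an integer p ≥ 1, τ > 0, and real N×N matrices D₁, D₂ such that D₁ is antisymmetric (D₁ᵀ = −D₁) and D₂ is symmetric (D₂ᵀ = D₂). Let u, u' : Fin N → ℝ satisfy (u'_j)² ≠ (u_j)² for every j, define w : Fin N → ℝ by w_j = (1/(p·(p+1)))·(((u'_j)^{p+1} − (u_j)^{p+1})/((u'_j)² − (u_j)²))·(u'_j + u_j), and suppose u' − u + τ·D₁·((1/2)·D₂·(u' + u) + w) = 0. Then −(1/2)·⟨D₂·u', u'⟩_h − (1/(p·(p+1)))·h·∑_j (u'_j)^{p+1} = −(1/2)·⟨D₂·u, u⟩_h − (1/(p·(p+1)))·h·∑_j (u_j)^{p+1}. (Energy part of Proposition 5.1: the modified Crank–Nicolson scheme conserves the discrete energy.) -/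
/-!
Put `g = (1/2) D₂ (u' + u) + w`, so that the scheme reads `u' - u = -τ D₁ g`. Since `D₁` is
antisymmetric, `⟨g, D₁ g⟩ = 0`, hence `⟨g, u' - u⟩ = 0`. By symmetry of `D₂` the linear part of
this pairing is `(1/2) (⟨D₂ u', u'⟩ - ⟨D₂ u, u⟩)`. In the pairing with `w`, the factor
`(u'_j + u_j) (u'_j - u_j)` cancels the denominator `u'_j² - u_j²`, leaving the difference of the
sums of `(p+1)`-st powers. So `⟨g, u' - u⟩` is, up to the factor `-h`, the energy difference.
-/

open scoped BigOperators

noncomputable section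

/-- The quadratic form of an antisymmetric matrix vanishes. -/
theorem dotProduct_mulVec_self_of_skew {N : ℕ} (A : Matrix (Fin N) (Fin N) ℝ)
    (hA : A.transpose = -A) (g : Fin N → ℝ) : g ⬝ᵥ A.mulVec g = 0 := by
  have h1 : g ⬝ᵥ A.mulVec g = -(g ⬝ᵥ A.mulVec g) := by
    conv_lhs => rw [Matrix.dotProduct_mulVec, ← Matrix.mulVec_transpose, hA,
      Matrix.neg_mulVec, neg_dotProduct, dotProduct_comm]
  linarith

/-- Energy part of Proposition 5.1: the modified Crank–Nicolson scheme conserves the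
discrete energy. -/
theorem MCN_energy_conserved
    (N : ℕ) (hN : 1 ≤ N) (h : ℝ) (hh : 0 < h) (p : ℕ) (hp : 1 ≤ p)
    (τ : ℝ) (hτ : 0 < τ)
    (D₁ D₂ : Matrix (Fin N) (Fin N) ℝ)
    (hD₁ : D₁.transpose = -D₁) (hD₂ : D₂.transpose = D₂)
    (u u' : Fin N → ℝ) (hne : ∀ j, (u' j) ^ 2 ≠ (u j) ^ 2)
    (w : Fin N → ℝ)
    (hw : w = fun j => (1 / ((p : ℝ) * ((p : ℝ) + 1)))
      * (((u' j) ^ (p + 1) - (u j) ^ (p + 1)) / ((u' j) ^ 2 - (u j) ^ 2))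
      * (u' j + u j))
    (hMCN : u' - u + τ • D₁.mulVec ((1 / 2 : ℝ) • D₂.mulVec (u' + u) + w) = 0) :
    -(1 / 2 : ℝ) * dip h (D₂.mulVec u') u'
        - (1 / ((p : ℝ) * ((p : ℝ) + 1))) * (h * ∑ j, (u' j) ^ (p + 1))
      = -(1 / 2 : ℝ) * dip h (D₂.mulVec u) u
        - (1 / ((p : ℝ) * ((p : ℝ) + 1))) * (h * ∑ j, (u j) ^ (p + 1)) := by
  set g : Fin N → ℝ := (1 / 2 : ℝ) • D₂.mulVec (u' + u) + w with hg
  have hskew : g ⬝ᵥ D₁.mulVec g = 0 := dotProduct_mulVec_self_of_skew D₁ hD₁ g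
  have horth : g ⬝ᵥ (u' - u) = 0 := by
    have h1 := congrArg (fun v => g ⬝ᵥ v) hMCN
    simpa only [dotProduct_add, dotProduct_smul, hskew, smul_zero, add_zero,
      dotProduct_zero] using h1
  have hsymm : D₂.mulVec u' ⬝ᵥ u = D₂.mulVec u ⬝ᵥ u' := by
    rw [dotProduct_comm, Matrix.dotProduct_mulVec, ← Matrix.mulVec_transpose, hD₂]
  have hwsum : w ⬝ᵥ (u' - u) = (1 / ((p : ℝ) * ((p : ℝ) + 1)))
      * (∑ j, (u' j) ^ (p + 1) - ∑ j, (u j) ^ (p + 1)) := by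
    rw [← Finset.sum_sub_distrib, Finset.mul_sum]
    refine Finset.sum_congr rfl fun j _ => ?_
    have hj : (u' j) ^ 2 - (u j) ^ 2 ≠ 0 := sub_ne_zero.mpr (hne j)
    have hcancel : ((u' j) ^ (p + 1) - (u j) ^ (p + 1)) / ((u' j) ^ 2 - (u j) ^ 2)
        * ((u' j) ^ 2 - (u j) ^ 2) = (u' j) ^ (p + 1) - (u j) ^ (p + 1) :=
      div_mul_cancel₀ _ hj
    rw [hw, Pi.sub_apply]
    linear_combination (1 / ((p : ℝ) * ((p : ℝ) + 1))) * hcancel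
  rw [hg, add_dotProduct, hwsum, smul_dotProduct, Matrix.mulVec_add, add_dotProduct,
    dotProduct_sub, dotProduct_sub, hsymm, smul_eq_mul] at horth
  change -(1 / 2 : ℝ) * (h * (D₂.mulVec u' ⬝ᵥ u')) - _
    = -(1 / 2 : ℝ) * (h * (D₂.mulVec u ⬝ᵥ u)) - _
  linear_combination (-h) * horth
end
end

section
/- Fix N ≥ 1, h > 0, an integer p ≥ 1, C₀ ∈ ℝ, τ > 0, and real N×N matrices D₁, D₂ such that D₁ is antisymmetric (D₁ᵀ = −D₁) and every row sum of D₁ is zero. Let u⁻, u⁰, u⁺ : Fin N → ℝ and v⁻, v⁺ ∈ ℝ with ⟨(u⁰)^{⊙p}, u⁰⟩_h + C₀ > 0; set q = (u⁰)^{⊙p}/√(⟨(u⁰)^{⊙p}, u⁰⟩_h + C₀), ũ = (u⁺ + u⁻)/2 and ṽ = (v⁺ + v⁻)/2, and suppose the SAV–Leap-Frog relations (u⁺ − u⁻)/(2τ) + D₁·(D₂·ũ + (ṽ/p)·q) = 0 and v⁺ − v⁻ = ((p+1)/2)·⟨q, u⁺ − u⁻⟩_h hold. Then ⟨u⁺,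 1⟩_h = ⟨u⁻, 1⟩_h, where 1 is the all-ones vector. (Momentum part of Proposition 5.2 in the Fourier pseudo-spectral fully discrete setting.) -/
open scoped BigOperators

noncomputable section

/-- Momentum part of Proposition 5.2: the SAV–Leap-Frog scheme conserves the
discrete momentum. -/
theorem SAV_LF_momentum_conserved
    (N : ℕ) (hN : 1 ≤ N) (h : ℝ) (hh : 0 < h) (p : ℕ) (hp : 1 ≤ p) (C₀ : ℝ)
    (τ : ℝ) (hτ : 0 < τ)
    (D₁ D₂ : Matrix (Fin N) (Fin N) ℝ)
    (hD₁ : D₁.transpose = -D₁) (hrow : ∀ i, ∑ j, D₁ i j = 0)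
    (um uz up : Fin N → ℝ) (vm vp : ℝ)
    (hpos : 0 < dip h (pw p uz) uz + C₀)
    (q : Fin N → ℝ)
    (hq : q = (Real.sqrt (dip h (pw p uz) uz + C₀))⁻¹ • pw p uz)
    (ut : Fin N → ℝ) (hut : ut = (1 / 2 : ℝ) • (up + um))
    (vt : ℝ) (hvt : vt = (vp + vm) / 2)
    (hLF1 : (1 / (2 * τ)) • (up - um) + D₁.mulVec (D₂.mulVec ut + (vt / (p : ℝ)) • q) = 0)
    (hLF2 : vp - vm = (((p : ℝ) + 1) / 2) * dip h q (up - um)) :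
    dip h up (fun _ => 1) = dip h um (fun _ => 1) := by
  -- Summing the first relation over the grid removes the `D₁` term.
  have hsum : ∑ i, ((1 / (2 * τ)) • (up - um) +
      D₁.mulVec (D₂.mulVec ut + (vt / (p : ℝ)) • q)) i = 0 := by
    rw [hLF1]; simp
  simp only [Pi.add_apply, Pi.smul_apply, Pi.sub_apply, smul_eq_mul, Finset.sum_add_distrib,
    sum_mulVec_eq_zero D₁ hD₁ hrow, add_zero, ← Finset.mul_sum, Finset.sum_sub_distrib] at hsum
  have hne : 1 / (2 * τ) ≠ 0 := by positivity
  have heq : ∑ i, up i = ∑ i, um i :=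
    sub_eq_zero.mp ((mul_eq_zero.mp hsum).resolve_left hne)
  simp [dip, heq]
end
end
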